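/- For every real number q with 0 < q < 1, one has S_even(q,2) = Π_{i≥1} (1 + q^{2i−1})²·(1 + q^{i})/(1 − q^{i}), the infinite product converging absolutely. -/

import Mathlib

/-!
The weight `q ^ A * t ^ B` of a sequence is a product of one factor per entry, and the only
constraint couples neighbouring entries, so the sum over the sequences that follow the tail from
index `N` on is computed by a `2 × 2` transfer matrix (`hasSum_conf`). All weights are
non-negative, hence `S_even(q, t)` is the limit of these sums along `N = 2 m`.

Let `α m` be the sum for `N = 2 m`, let `u = t ^ 2` and `(x; p)_m = ∏_{k < m} (1 - x p ^ k)`.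
Eliminating the second component of the transfer recursion, `d m = α m * (q; q²)_m` satisfies a
three-term recurrence of Al-Salam–Chihara type, which for `D(s) = ∑ d m s ^ m` reads
`(1 - s) (1 - q s) D(s) = (1 + (u - 2) q s + q² s²) D(q² s)`.
As `α` is increasing and bounded, `d m` converges to `L = lim_{s → 1} (1 - s) D(s)`, and
iterating the functional equation from `s = 1` towards `s = 0` gives
`(q²; q²)_∞ (q; q²)_∞ L = ∏ (1 + (u - 2) q ^ (2 k + 1) + q ^ (4 k + 2))`.
Since `L = (q; q²)_∞ lim α`, the limit of `α` has the denominator `(q; q²)_∞² (q²; q²)_∞`, and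
Euler's identity `(-q; q)_∞ (q; q²)_∞ = 1` brings it into product form.
For `t = 2` the factors on the right are the squares `(1 + q ^ (2 k + 1)) ^ 2`.
-/

open scoped BigOperators

/-- `He` is the set of sequences `(ω_{-i})_{i ≥ 1}` of non-negative integers (indexed here by
`n : ℕ` with `i = n + 1`) with no two consecutive vanishing entries, agreeing for large `i`
with the sequence which is `1` at even `i` and `0` at odd `i`. -/
def He : Set (ℕ → ℕ) :=
  {ω | (∀ n : ℕ, ¬(ω n = 0 ∧ ω (n + 1) = 0)) ∧
       (∃ N : ℕ, ∀ n ≥ N, ω n = if (n + 1) % 2 = 0 then 1 else 0)}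

/-- `Ho` is as `He`, but agreeing for large `i` with the sequence which is `1` at odd `i`
and `0` at even `i`. -/
def Ho : Set (ℕ → ℕ) :=
  {ω | (∀ n : ℕ, ¬(ω n = 0 ∧ ω (n + 1) = 0)) ∧
       (∃ N : ℕ, ∀ n ≥ N, ω n = if (n + 1) % 2 = 1 then 1 else 0)}

/-- `A(ω) = Σ_{i odd} i·ω_{-i} + Σ_{i even} i·(ω_{-i} − 1)`. -/
noncomputable def Afun (ω : ℕ → ℕ) : ℤ :=
  ∑ᶠ n : ℕ, (if (n + 1) % 2 = 1 then ((n : ℤ) + 1) * (ω n : ℤ)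
             else ((n : ℤ) + 1) * ((ω n : ℤ) - 1))

/-- `B(ω) = 2·(Σ_{i odd} 1{ω_{-i} ≥ 1} − Σ_{i even} 1{ω_{-i} = 0})`. -/
noncomputable def Bfun (ω : ℕ → ℕ) : ℤ :=
  2 * ((∑ᶠ n : ℕ, if (n + 1) % 2 = 1 ∧ 1 ≤ ω n then (1 : ℤ) else 0)
     - (∑ᶠ n : ℕ, if (n + 1) % 2 = 0 ∧ ω n = 0 then (1 : ℤ) else 0))

/-- `A'(ω) = Σ_{i even} i·ω_{-i} + Σ_{i odd} i·(ω_{-i} − 1)`. -/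
noncomputable def A'fun (ω : ℕ → ℕ) : ℤ :=
  ∑ᶠ n : ℕ, (if (n + 1) % 2 = 0 then ((n : ℤ) + 1) * (ω n : ℤ)
             else ((n : ℤ) + 1) * ((ω n : ℤ) - 1))

/-- `B'(ω) = 2·(Σ_{i even} 1{ω_{-i} ≥ 1} − Σ_{i odd} 1{ω_{-i} = 0})`. -/
noncomputable def B'fun (ω : ℕ → ℕ) : ℤ :=
  2 * ((∑ᶠ n : ℕ, if (n + 1) % 2 = 0 ∧ 1 ≤ ω n then (1 : ℤ) else 0)
     - (∑ᶠ n : ℕ, if (n + 1) % 2 = 1 ∧ ω n = 0 then (1 : ℤ) else 0))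

/-- `S_even(q̃, t) = Σ_{ω ∈ H_e} q̃^{A(ω)} t^{B(ω)}`. -/
noncomputable def Seven (q t : ℝ) : ℝ := ∑' ω : He, q ^ Afun ω.1 * t ^ Bfun ω.1

/-- `S_odd(q̃, t) = Σ_{ω ∈ H_o} q̃^{A'(ω)} t^{B'(ω)}`. -/
noncomputable def Sodd (q t : ℝ) : ℝ := ∑' ω : Ho, q ^ A'fun ω.1 * t ^ B'fun ω.1

open Filter Topology

/-! ### Infinite products -/

section QPochhammer

variable {𝕜 : Type*} [NormedField 𝕜] {a q : 𝕜}

/-- The infinite `q`-Pochhammer symbol `(a; q)_∞ = ∏_{k ≥ 0} (1 - a q ^ k)`. -/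
noncomputable def qPochhammerInf (a q : 𝕜) : 𝕜 := ∏' k : ℕ, (1 - a * q ^ k)

lemma norm_sq_lt_one (hq : ‖q‖ < 1) : ‖q ^ 2‖ < 1 := by
  rw [norm_pow]
  exact pow_lt_one₀ (norm_nonneg q) hq two_ne_zero

lemma summable_norm_mul_pow (a : 𝕜) (hq : ‖q‖ < 1) : Summable fun k : ℕ => ‖a * q ^ k‖ := by
  simpa only [norm_mul, norm_pow] using
    (summable_geometric_of_lt_one (norm_nonneg q) hq).mul_left ‖a‖

variable [CompleteSpace 𝕜]

lemma hasProd_qPochhammerInf (a : 𝕜) (hq : ‖q‖ < 1) :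
    HasProd (fun k : ℕ => 1 - a * q ^ k) (qPochhammerInf a q) := by
  refine Multipliable.hasProd ?_
  simpa only [sub_eq_add_neg, norm_neg] using
    multipliable_one_add_of_summable (f := fun k => -(a * q ^ k))
      (by simpa only [norm_neg] using summable_norm_mul_pow a hq)

lemma qPochhammerInf_ne_zero (ha : ‖a‖ < 1) (hq : ‖q‖ < 1) : qPochhammerInf a q ≠ 0 := by
  have factor_ne_zero (k : ℕ) : 1 + -(a * q ^ k) ≠ 0 := by
    have norm_lt_one : ‖a * q ^ k‖ < 1 := by
      rw [norm_mul, norm_pow]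
      exact mul_lt_one_of_nonneg_of_lt_one_left (norm_nonneg a) ha
        (pow_le_one₀ (norm_nonneg q) hq.le)
    intro h
    rw [← sub_eq_add_neg, sub_eq_zero] at h
    simp [← h] at norm_lt_one
  simpa only [qPochhammerInf, sub_eq_add_neg] using
    tprod_one_add_ne_zero_of_summable factor_ne_zero
      (by simpa only [norm_neg] using summable_norm_mul_pow a hq)

lemma qPochhammerInf_sq_mul_qPochhammerInf_sq (a : 𝕜) (hq : ‖q‖ < 1) :
    qPochhammerInf a (q ^ 2) * qPochhammerInf (a * q) (q ^ 2) = qPochhammerInf a q := by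
  have even := hasProd_qPochhammerInf a (norm_sq_lt_one hq)
  have odd := hasProd_qPochhammerInf (a * q) (norm_sq_lt_one hq)
  refine (HasProd.even_mul_odd (f := fun k => 1 - a * q ^ k) ?_ ?_).unique
    (hasProd_qPochhammerInf a hq)
  · simpa only [pow_mul] using even
  · simpa only [pow_succ', pow_mul, mul_assoc] using odd

lemma qPochhammerInf_mul_qPochhammerInf_neg (a : 𝕜) (hq : ‖q‖ < 1) :
    qPochhammerInf a q * qPochhammerInf (-a) q = qPochhammerInf (a ^ 2) (q ^ 2) := by
  have product := (hasProd_qPochhammerInf a hq).mul (hasProd_qPochhammerInf (-a) hq)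
  exact product.unique ((hasProd_qPochhammerInf (a ^ 2) (norm_sq_lt_one hq)).congr_fun
    fun k => by ring)

lemma hasProd_one_sub_mul_pow_two_mul_add (a : 𝕜) (hq : ‖q‖ < 1) (b : ℕ) :
    HasProd (fun k : ℕ => 1 - a * q ^ (2 * k + b)) (qPochhammerInf (a * q ^ b) (q ^ 2)) :=
  (hasProd_qPochhammerInf (a * q ^ b) (norm_sq_lt_one hq)).congr_fun fun k => by ring

lemma multipliable_one_add_mul_pow_add_mul_pow (a b : 𝕜) (hq : ‖q‖ < 1) :
    Multipliable fun k : ℕ => 1 + a * q ^ k + b * q ^ (2 * k) := by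
  have summable_norm : Summable fun k : ℕ => ‖a * q ^ k + b * q ^ (2 * k)‖ := by
    refine ((summable_norm_mul_pow a hq).add
      (summable_norm_mul_pow b (norm_sq_lt_one hq))).of_nonneg_of_le (fun _ => norm_nonneg _) ?_
    intro k
    rw [pow_mul]
    exact norm_add_le _ _
  simpa only [add_assoc] using multipliable_one_add_of_summable summable_norm

/-- Euler's identity `(-q; q)_∞ = 1 / (q; q²)_∞` turns the quotient `(-q; q)_∞ / (q; q)_∞` into
this form. -/
lemma hasProd_one_add_pow_div_one_sub_pow (hq : ‖q‖ < 1) :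
    HasProd (fun i : ℕ => (1 + q ^ (i + 1)) / (1 - q ^ (i + 1)))
      (qPochhammerInf q (q ^ 2) ^ 2 * qPochhammerInf (q ^ 2) (q ^ 2))⁻¹ := by
  have hq_sq := norm_sq_lt_one hq
  have full_ne_zero := qPochhammerInf_ne_zero hq hq
  have odd_ne_zero := qPochhammerInf_ne_zero hq hq_sq
  have even_ne_zero := qPochhammerInf_ne_zero hq_sq hq_sq
  have split : qPochhammerInf q (q ^ 2) * qPochhammerInf (q ^ 2) (q ^ 2) = qPochhammerInf q q := by
    simpa only [← sq] using qPochhammerInf_sq_mul_qPochhammerInf_sq q hq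
  have quotient : qPochhammerInf (-q) q / qPochhammerInf q q =
      (qPochhammerInf q (q ^ 2) ^ 2 * qPochhammerInf (q ^ 2) (q ^ 2))⁻¹ := by
    have euler := qPochhammerInf_mul_qPochhammerInf_neg q hq
    rw [← split] at euler ⊢
    field_simp
    apply mul_right_cancel₀ even_ne_zero
    linear_combination euler
  rw [← quotient]
  refine ((hasProd_qPochhammerInf (-q) hq).div₀ (hasProd_qPochhammerInf q hq)
    full_ne_zero).congr_fun fun i => ?_
  simp only [pow_succ', neg_mul, sub_neg_eq_add]

end QPochhammer

lemma tprod_mul_eq_tprod_mul_of_tendsto {M : Type*} [CommMonoid M] [TopologicalSpace M]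
    [ContinuousMul M] [T2Space M] {a b f : ℕ → M} {l : M} (ha : Multipliable a)
    (hb : Multipliable b) (hf : Tendsto f atTop (𝓝 l))
    (hrec : ∀ k, a k * f k = b k * f (k + 1)) : (∏' k, a k) * f 0 = (∏' k, b k) * l := by
  have partial_products (n : ℕ) :
      (∏ k ∈ Finset.range n, a k) * f 0 = (∏ k ∈ Finset.range n, b k) * f n := by
    induction n with
    | zero => simp
    | succ n ih =>
      rw [Finset.prod_range_succ, Finset.prod_range_succ, mul_right_comm, ih, mul_assoc,
        mul_comm (f n), hrec, ← mul_assoc]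
  exact tendsto_nhds_unique (ha.tendsto_prod_tprod_nat.mul_const _)
    ((hb.tendsto_prod_tprod_nat.mul hf).congr fun n => (partial_products n).symm)

lemma bddAbove_range_of_le_mul {a v : ℕ → ℝ} (ha : Multipliable a) (ha_nonneg : ∀ n, 0 ≤ a n)
    (hv : ∀ n, v (n + 1) ≤ a n * v n) : BddAbove (Set.range v) := by
  have le_prod (n : ℕ) : v n ≤ v 0 * ∏ k ∈ Finset.range n, a k := by
    induction n with
    | zero => simp
    | succ n ih =>
      calc v (n + 1) ≤ a n * v n := hv n
        _ ≤ a n * (v 0 * ∏ k ∈ Finset.range n, a k) := mul_le_mul_of_nonneg_left ih (ha_nonneg n)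
        _ = v 0 * ∏ k ∈ Finset.range (n + 1), a k := by rw [Finset.prod_range_succ]; ring
  obtain ⟨K, hK⟩ := (ha.tendsto_prod_tprod_nat.const_mul (v 0)).bddAbove_range
  refine ⟨K, ?_⟩
  rintro _ ⟨n, rfl⟩
  exact (le_prod n).trans (hK ⟨n, rfl⟩)

/-! ### Sequences with a `p`-difference generating function -/

section GeneratingFunction

variable {𝕜 : Type*} [NormedField 𝕜] {d : ℕ → 𝕜} {p s a₁ a₂ b₁ b₂ : 𝕜}

/-- The recurrence for the coefficients `d n` of a power series `D` which encodes the functional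
equation `(1 - a₁ s - a₂ s²) D(s) = (1 + b₁ s + b₂ s²) D(p s)`. -/
structure IsPDifferenceRec (p a₁ a₂ b₁ b₂ : 𝕜) (d : ℕ → 𝕜) : Prop where
  one : (1 - p) * d 1 = (a₁ + b₁) * d 0
  add_two (n : ℕ) : (1 - p ^ (n + 2)) * d (n + 2) =
    (a₁ + b₁ * p ^ (n + 1)) * d (n + 1) + (a₂ + b₂ * p ^ n) * d n

namespace IsPDifferenceRec

lemma tsum_eq (h : IsPDifferenceRec p a₁ a₂ b₁ b₂ d) (hs : Summable fun n => d n * s ^ n)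
    (hps : Summable fun n => d n * (p * s) ^ n) :
    (1 - a₁ * s - a₂ * s ^ 2) * ∑' n, d n * s ^ n =
      (1 + b₁ * s + b₂ * s ^ 2) * ∑' n, d n * (p * s) ^ n := by
  have hs₁ := (summable_nat_add_iff 1).2 hs
  have hs₂ := (summable_nat_add_iff 2).2 hs
  have hps₁ := (summable_nat_add_iff 1).2 hps
  have hps₂ := (summable_nat_add_iff 2).2 hps
  have split (r : 𝕜) (hr : Summable fun n => d n * r ^ n) :
      ∑' n, d n * r ^ n = d 0 + ∑' n, d (n + 1) * r ^ (n + 1) := by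
    simpa using hr.tsum_eq_zero_add
  have split_two (r : 𝕜) (hr : Summable fun n => d n * r ^ n) :
      ∑' n, d (n + 1) * r ^ (n + 1) = d 1 * r + ∑' n, d (n + 2) * r ^ (n + 2) := by
    simpa using ((summable_nat_add_iff 1).2 hr).tsum_eq_zero_add
  have tails : (∑' n, d (n + 2) * s ^ (n + 2)) - a₁ * s * (∑' n, d (n + 1) * s ^ (n + 1))
        - a₂ * s ^ 2 * ∑' n, d n * s ^ n =
      (∑' n, d (n + 2) * (p * s) ^ (n + 2)) + b₁ * s * (∑' n, d (n + 1) * (p * s) ^ (n + 1))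
        + b₂ * s ^ 2 * ∑' n, d n * (p * s) ^ n := by
    rw [← tsum_mul_left, ← tsum_mul_left, ← tsum_mul_left, ← tsum_mul_left,
      ← hs₂.tsum_sub (hs₁.mul_left _), ← (hs₂.sub (hs₁.mul_left _)).tsum_sub (hs.mul_left _),
      ← hps₂.tsum_add (hps₁.mul_left _), ← (hps₂.add (hps₁.mul_left _)).tsum_add (hps.mul_left _)]
    refine tsum_congr fun n => ?_
    simp only [mul_pow]
    linear_combination s ^ (n + 2) * h.add_two n
  linear_combination tails + split s hs + split_two s hs - a₁ * s * split s hs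
    - split (p * s) hps - split_two (p * s) hps - b₁ * s * split (p * s) hps + s * h.one

/-- The functional equation at `s = 1`, where `1 - a₁ s - a₂ s² = (1 - s) (1 + a₂ s)` vanishes:
`(1 - s) D(s)` is replaced by its limit `L`. -/
lemma limit_eq (h : IsPDifferenceRec p a₁ a₂ b₁ b₂ d) (ha : a₁ + a₂ = 1) {L : 𝕜}
    (hL : Tendsto d atTop (𝓝 L)) (hp : Summable fun n => d n * p ^ n) :
    (1 + a₂) * L = (1 + b₁ + b₂) * ∑' n, d n * p ^ n := by
  have hp₁ := (summable_nat_add_iff 1).2 hp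
  have hp₂ := (summable_nat_add_iff 2).2 hp
  have split := hp.tsum_eq_zero_add
  have split_two := hp₁.tsum_eq_zero_add
  have increments : HasSum (fun n => (d (n + 2) + a₂ * d (n + 1)) - (d (n + 1) + a₂ * d n))
      ((∑' n, d (n + 2) * p ^ (n + 2)) + b₁ * (∑' n, d (n + 1) * p ^ (n + 1))
        + b₂ * ∑' n, d n * p ^ n) := by
    refine ((hp₂.hasSum.add (hp₁.hasSum.mul_left b₁)).add (hp.hasSum.mul_left b₂)).congr_fun ?_
    intro n
    linear_combination h.add_two n + d (n + 1) * ha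
  have telescope : Tendsto (fun n => ∑ k ∈ Finset.range n,
      ((d (k + 2) + a₂ * d (k + 1)) - (d (k + 1) + a₂ * d k))) atTop
      (𝓝 (L + a₂ * L - (d 1 + a₂ * d 0))) := by
    have shifted := (hL.comp (tendsto_add_atTop_nat 1)).add (hL.const_mul a₂)
    refine (shifted.sub_const (d 1 + a₂ * d 0)).congr fun n => ?_
    exact (Finset.sum_range_sub (fun k => d (k + 1) + a₂ * d k) n).symm
  have limit := tendsto_nhds_unique telescope increments.tendsto_sum_nat
  simp only [pow_zero, mul_one, zero_add, pow_one] at split split_two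
  linear_combination limit - (1 + b₁) * split - split_two + h.one + d 0 * ha

end IsPDifferenceRec

lemma summable_norm_mul_pow_of_tendsto {L : 𝕜} (hL : Tendsto d atTop (𝓝 L)) (hs : ‖s‖ < 1) :
    Summable fun n => ‖d n * s ^ n‖ := by
  obtain ⟨C, hC⟩ := hL.norm.bddAbove_range
  refine ((summable_geometric_of_lt_one (norm_nonneg s) hs).mul_left C).of_nonneg_of_le
    (fun n => norm_nonneg _) fun n => ?_
  rw [norm_mul, norm_pow]
  exact mul_le_mul_of_nonneg_right (hC ⟨n, rfl⟩) (by positivity)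

lemma tendsto_tsum_mul_pow [CompleteSpace 𝕜] {ι : Type*} {l : Filter ι} {r : 𝕜} {x : ι → 𝕜}
    (hr : Summable fun n => ‖d n * r ^ n‖) (hx : Tendsto x l (𝓝 0)) (hxr : ∀ i, ‖x i‖ ≤ ‖r‖) :
    Tendsto (fun i => ∑' n, d n * x i ^ n) l (𝓝 (d 0)) := by
  have value_zero : ∑' n, d n * (0 : 𝕜) ^ n = d 0 := by
    rw [tsum_eq_single 0 fun n hn => by simp [hn]]
    simp
  rw [← value_zero]
  refine tendsto_tsum_of_dominated_convergence hr (fun n => (hx.pow n).const_mul (d n)) ?_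
  refine Eventually.of_forall fun i n => ?_
  rw [norm_mul, norm_mul, norm_pow, norm_pow]
  exact mul_le_mul_of_nonneg_left (pow_le_pow_left₀ (norm_nonneg _) (hxr i) n) (norm_nonneg _)

/-- Iterating the functional equation from `s = 1` along `s = p ^ k → 0`. -/
lemma IsPDifferenceRec.mul_limit_eq [CompleteSpace 𝕜] (h : IsPDifferenceRec p a₁ a₂ b₁ b₂ d)
    (ha : a₁ + a₂ = 1) (hp : ‖p‖ < 1) {L : 𝕜} (hL : Tendsto d atTop (𝓝 L)) :
    qPochhammerInf p p * qPochhammerInf (-a₂) p * L =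
      (∏' k : ℕ, (1 + b₁ * p ^ k + b₂ * p ^ (2 * k))) * d 0 := by
  have norm_pow_succ_le (k : ℕ) : ‖p ^ (k + 1)‖ ≤ ‖p‖ := by
    rw [norm_pow]
    exact pow_le_of_le_one (norm_nonneg p) hp.le k.succ_ne_zero
  have summable_at (k : ℕ) : Summable fun n => d n * (p ^ (k + 1)) ^ n :=
    (summable_norm_mul_pow_of_tendsto hL ((norm_pow_succ_le k).trans_lt hp)).of_norm
  let f : ℕ → 𝕜
    | 0 => L
    | k + 1 => (1 - p ^ (k + 1)) * ∑' n, d n * (p ^ (k + 1)) ^ n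
  have f_rec (k : ℕ) : (1 - p * p ^ k) * (1 - -a₂ * p ^ k) * f k =
      (1 + b₁ * p ^ k + b₂ * p ^ (2 * k)) * f (k + 1) := by
    rcases k with _ | k
    · have at_one := h.limit_eq ha hL (by simpa using summable_at 0)
      simp only [f, zero_add, pow_zero, pow_one, mul_zero, mul_one]
      linear_combination (1 - p) * at_one
    · have at_pow := h.tsum_eq (summable_at k) (by simpa only [pow_succ'] using summable_at (k + 1))
      simp only [← pow_succ'] at at_pow
      simp only [f]
      linear_combination (1 - p ^ (k + 2)) * at_pow +
        (1 - p ^ (k + 2)) * p ^ (k + 1) * (∑' n, d n * (p ^ (k + 1)) ^ n) * ha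
  have f_limit : Tendsto f atTop (𝓝 (d 0)) := by
    have pow_tendsto : Tendsto (fun k => p ^ (k + 1)) atTop (𝓝 0) :=
      (tendsto_pow_atTop_nhds_zero_of_norm_lt_one hp).comp (tendsto_add_atTop_nat 1)
    refine (tendsto_add_atTop_iff_nat 1).1 ?_
    simpa only [f, sub_zero, one_mul] using (pow_tendsto.const_sub 1).mul
      (tendsto_tsum_mul_pow (summable_norm_mul_pow_of_tendsto hL hp) pow_tendsto norm_pow_succ_le)
  have left := (hasProd_qPochhammerInf p hp).mul (hasProd_qPochhammerInf (-a₂) hp)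
  rw [← left.tprod_eq]
  exact tprod_mul_eq_tprod_mul_of_tendsto left.multipliable
    (multipliable_one_add_mul_pow_add_mul_pow b₁ b₂ hp) f_limit f_rec

end GeneratingFunction

/-! ### The transfer recursion -/

/-- Solutions of the two-entry transfer recursion: `α m` is the partition function of the sequences
following the tail from index `2 m` on, `β m` that of the ones following it from `2 m - 1` on with a
positive entry just before. The parameter `u` stands for `t ^ 2`. -/
structure IsTransferSolution (q u : ℝ) (α β : ℕ → ℝ) : Prop where
  left_zero : α 0 = 1
  right_zero : β 0 = 0
  right_succ (m : ℕ) :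
    (1 - q ^ (2 * m + 1)) * β (m + 1) = u * q ^ (2 * m + 1) * α m + q * β m
  left_succ (m : ℕ) : (1 - q ^ (2 * m + 2)) * α (m + 1) = β (m + 1) + α m

lemma one_sub_pow_pos {q : ℝ} (hq0 : 0 ≤ q) (hq1 : q < 1) {n : ℕ} (hn : n ≠ 0) : 0 < 1 - q ^ n :=
  sub_pos.2 (pow_lt_one₀ hq0 hq1 hn)

namespace IsTransferSolution

variable {q u : ℝ} {α β : ℕ → ℝ}

lemma nonneg (h : IsTransferSolution q u α β) (hq0 : 0 ≤ q) (hq1 : q < 1) (hu : 0 ≤ u) (m : ℕ) :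
    0 ≤ α m ∧ 0 ≤ β m := by
  induction m with
  | zero => simp [h.left_zero, h.right_zero]
  | succ m ih =>
    obtain ⟨hα, hβ⟩ := ih
    have hβ_succ : 0 ≤ β (m + 1) := by
      refine nonneg_of_mul_nonneg_right ?_ (one_sub_pow_pos hq0 hq1 (2 * m).succ_ne_zero)
      rw [h.right_succ]
      positivity
    refine ⟨?_, hβ_succ⟩
    refine nonneg_of_mul_nonneg_right ?_ (one_sub_pow_pos hq0 hq1 (2 * m + 1).succ_ne_zero)
    rw [h.left_succ]
    positivity

lemma monotone (h : IsTransferSolution q u α β) (hq0 : 0 ≤ q) (hq1 : q < 1) (hu : 0 ≤ u) :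
    Monotone α := by
  refine monotone_nat_of_le_succ fun m => ?_
  obtain ⟨hα, hβ⟩ := h.nonneg hq0 hq1 hu (m + 1)
  have : 0 ≤ q ^ (2 * m + 2) * α (m + 1) := by positivity
  linarith [h.left_succ m]

/-- In the limit `m → ∞` the recursion becomes `β' = q β`, `α' = α + β'`, which preserves
`(1 - q) α + q β`. -/
lemma lyapunov_succ_le (h : IsTransferSolution q u α β) (hq0 : 0 ≤ q) (hq1 : q < 1) (hu : 0 ≤ u)
    (m : ℕ) :
    (1 - q ^ (2 * m + 1)) * (1 - q ^ (2 * m + 2)) * ((1 - q) * α (m + 1) + q * β (m + 1)) ≤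
      (1 + u / (1 - q) * q ^ (2 * m + 1)) * ((1 - q) * α m + q * β m) := by
  obtain ⟨hα, hβ⟩ := h.nonneg hq0 hq1 hu m
  have hβ_succ := (h.nonneg hq0 hq1 hu (m + 1)).2
  have one_sub_q_pos : 0 < 1 - q := sub_pos.2 hq1
  have x_pos := one_sub_pow_pos hq0 hq1 (2 * m).succ_ne_zero
  have hleft := h.left_succ m
  have hright := h.right_succ m
  set x := q ^ (2 * m + 1)
  set y := q ^ (2 * m + 2)
  have : 0 ≤ x := pow_nonneg hq0 _
  have : 0 ≤ y := pow_nonneg hq0 _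
  calc (1 - x) * (1 - y) * ((1 - q) * α (m + 1) + q * β (m + 1))
      = (1 - x) * β (m + 1) + (1 - q) * α m
          - (q * y * ((1 - x) * β (m + 1)) + (1 - q) * x * α m) := by
        linear_combination (1 - q) * (1 - x) * hleft
    _ ≤ (1 - x) * β (m + 1) + (1 - q) * α m := sub_le_self _ (by positivity)
    _ = u * x * α m + ((1 - q) * α m + q * β m) := by linear_combination hright
    _ ≤ u * x * α m + u / (1 - q) * x * (q * β m) + ((1 - q) * α m + q * β m) := by
        gcongr
        exact le_add_of_nonneg_right (by positivity)
    _ = (1 + u / (1 - q) * x) * ((1 - q) * α m + q * β m) := by field_simp; ring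

lemma bddAbove_range (h : IsTransferSolution q u α β) (hq0 : 0 ≤ q) (hq1 : q < 1) (hu : 0 ≤ u) :
    BddAbove (Set.range α) := by
  have hq : ‖q‖ < 1 := by rwa [Real.norm_of_nonneg hq0]
  have x_pos (m : ℕ) := one_sub_pow_pos hq0 hq1 (2 * m).succ_ne_zero
  have y_pos (m : ℕ) := one_sub_pow_pos hq0 hq1 (2 * m + 1).succ_ne_zero
  have one_sub_q_pos : 0 < 1 - q := sub_pos.2 hq1
  have numerator : Multipliable fun m : ℕ => 1 + u / (1 - q) * q ^ (2 * m + 1) := by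
    simpa only [neg_mul, sub_neg_eq_add] using
      (hasProd_one_sub_mul_pow_two_mul_add (-(u / (1 - q))) hq 1).multipliable
  have denominator := (hasProd_one_sub_mul_pow_two_mul_add 1 hq 1).mul
    (hasProd_one_sub_mul_pow_two_mul_add 1 hq 2)
  simp only [one_mul, pow_one] at denominator
  have denominator_ne_zero := denominator.tprod_eq.trans_ne (mul_ne_zero
    (qPochhammerInf_ne_zero hq (norm_sq_lt_one hq))
    (qPochhammerInf_ne_zero (norm_sq_lt_one hq) (norm_sq_lt_one hq)))
  obtain ⟨K, hK⟩ := bddAbove_range_of_le_mul (v := fun m => (1 - q) * α m + q * β m)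
    (numerator.div₀ denominator.multipliable denominator_ne_zero)
    (fun m => by have := x_pos m; have := y_pos m; positivity)
    (fun m => by
      rw [div_mul_eq_mul_div, le_div_iff₀ (mul_pos (x_pos m) (y_pos m)), mul_comm]
      exact h.lyapunov_succ_le hq0 hq1 hu m)
  refine ⟨K / (1 - q), ?_⟩
  rintro _ ⟨m, rfl⟩
  rw [le_div_iff₀ one_sub_q_pos, mul_comm]
  have hβ := mul_nonneg hq0 (h.nonneg hq0 hq1 hu m).2
  exact (le_add_of_nonneg_right hβ).trans (hK ⟨m, rfl⟩)

/-- This rescaling of `α` makes the difference equation for its generating function first-order. -/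
lemma isPDifferenceRec (h : IsTransferSolution q u α β) :
    IsPDifferenceRec (q ^ 2) (1 + q) (-q) ((u - 2) * q) (q ^ 2)
      (fun m => α m * ∏ k ∈ Finset.range m, (1 - q ^ (2 * k + 1))) where
  one := by
    have hleft := h.left_succ 0
    have hright := h.right_succ 0
    simp only [h.left_zero, h.right_zero, mul_zero, zero_add, pow_one] at hleft hright
    simp only [Finset.prod_range_one, Finset.prod_range_zero, h.left_zero, mul_zero, zero_add,
      pow_one]
    linear_combination (1 - q) * hleft + hright
  add_two n := by
    have hright := h.right_succ (n + 1)
    have hleft := h.left_succ (n + 1)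
    have hleft_prev := h.left_succ n
    simp only [Finset.prod_range_succ]
    linear_combination (1 - q ^ (2 * n + 1)) * (∏ k ∈ Finset.range n, (1 - q ^ (2 * k + 1))) *
      ((1 - q ^ (2 * n + 3)) * hleft + hright - q * hleft_prev)

lemma tendsto (h : IsTransferSolution q u α β) (hq0 : 0 ≤ q) (hq1 : q < 1) (hu : 0 ≤ u) :
    Tendsto α atTop (𝓝 ((∏' k : ℕ, (1 + (u - 2) * q ^ (2 * k + 1) + q ^ (4 * k + 2))) *
      (qPochhammerInf q (q ^ 2) ^ 2 * qPochhammerInf (q ^ 2) (q ^ 2))⁻¹)) := by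
  have hq : ‖q‖ < 1 := by rwa [Real.norm_of_nonneg hq0]
  have odd_ne_zero := qPochhammerInf_ne_zero hq (norm_sq_lt_one hq)
  have even_ne_zero := qPochhammerInf_ne_zero (norm_sq_lt_one hq) (norm_sq_lt_one hq)
  have α_tendsto := tendsto_atTop_ciSup (h.monotone hq0 hq1 hu) (h.bddAbove_range hq0 hq1 hu)
  have odd_tendsto : Tendsto (fun m => ∏ k ∈ Finset.range m, (1 - q ^ (2 * k + 1))) atTop
      (𝓝 (qPochhammerInf q (q ^ 2))) := by
    simpa only [one_mul, pow_one] using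
      (hasProd_one_sub_mul_pow_two_mul_add 1 hq 1).tendsto_prod_nat
  have limit_eq := h.isPDifferenceRec.mul_limit_eq (by ring) (norm_sq_lt_one hq)
    (α_tendsto.mul odd_tendsto)
  have numerator_eq : ∏' k : ℕ, (1 + (u - 2) * q * (q ^ 2) ^ k + q ^ 2 * (q ^ 2) ^ (2 * k)) =
      ∏' k : ℕ, (1 + (u - 2) * q ^ (2 * k + 1) + q ^ (4 * k + 2)) :=
    tprod_congr fun k => by ring
  rw [numerator_eq] at limit_eq
  simp only [neg_neg, h.left_zero, Finset.prod_range_zero, mul_one] at limit_eq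
  convert α_tendsto using 2
  field_simp
  linear_combination -limit_eq

end IsTransferSolution

/-! ### Transfer matrix -/

lemma hasSum_iUnion_of_monotone {ι : Type*} {f : ι → ℝ} {S : ℕ → Set ι} {a : ℕ → ℝ} {l : ℝ}
    (hf : ∀ i, 0 ≤ f i) (hS : Monotone S) (ha : ∀ n, HasSum (fun i : S n => f i) (a n))
    (hl : Tendsto a atTop (𝓝 l)) : HasSum (fun i : ⋃ n, S n => f i) l := by
  have ha_indicator (n : ℕ) : HasSum ((S n).indicator f) (a n) :=
    hasSum_subtype_iff_indicator.1 (ha n)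
  have ha_mono : Monotone a := fun m n hmn =>
    hasSum_le (Set.indicator_le_indicator_of_subset (hS hmn) hf) (ha_indicator m) (ha_indicator n)
  refine hasSum_subtype_iff_indicator.2
    (hasSum_of_isLUB_of_nonneg l (fun i => Set.indicator_nonneg (fun i _ => hf i) i) ⟨?_, ?_⟩)
  · rintro _ ⟨s, rfl⟩
    have eventually_eq : ∀ᶠ n in atTop, ∀ i ∈ s, (S n).indicator f i = (⋃ n, S n).indicator f i :=
      (Filter.eventually_all_finset s).2 fun i _ =>
        Monotone.indicator_eventuallyEq_iUnion S hS f i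
    obtain ⟨n, hn⟩ := eventually_eq.exists
    calc ∑ i ∈ s, (⋃ n, S n).indicator f i = ∑ i ∈ s, (S n).indicator f i :=
          Finset.sum_congr rfl fun i hi => (hn i hi).symm
      _ ≤ a n := sum_le_hasSum s (fun i _ => Set.indicator_nonneg (fun i _ => hf i) i)
          (ha_indicator n)
      _ ≤ l := ha_mono.ge_of_tendsto hl n
  · intro b hb
    refine le_of_tendsto' hl fun n => (hasSum_le_of_sum_le (ha_indicator n) fun s => ?_)
    refine le_trans (Finset.sum_le_sum fun i _ => ?_) (hb ⟨s, rfl⟩)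
    exact Set.indicator_le_indicator_of_subset (Set.subset_iUnion S n) hf i

section Transfer

variable {τ : ℕ → ℕ} {w : ℕ → ℕ → ℝ} {N : ℕ}

/-- The sequences which agree with the tail `τ` from index `N` on and have no two consecutive zeros
below `N`. -/
def conf (τ : ℕ → ℕ) (N : ℕ) : Set (ℕ → ℕ) :=
  {ω | (∀ n ≥ N, ω n = τ n) ∧ ∀ n, n + 1 < N → ¬(ω n = 0 ∧ ω (n + 1) = 0)}

/-- The sequences in `conf τ N` whose last entry before the tail, if there is one, is positive. -/
def posConf (τ : ℕ → ℕ) (N : ℕ) : Set (ℕ → ℕ) :=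
  {ω ∈ conf τ N | ∀ n, n + 1 = N → ω n ≠ 0}

/-- The weight of the entries before the tail when an entry `k` at index `n` has weight `w n k`. -/
def confWeight (w : ℕ → ℕ → ℝ) (N : ℕ) (ω : ℕ → ℕ) : ℝ := ∏ n ∈ Finset.range N, w n (ω n)

/-- The partition functions of `posConf τ N` and of `conf τ N \ posConf τ N` for the weight
`confWeight w N`, computed by appending one entry at a time. -/
noncomputable def transferVec (w : ℕ → ℕ → ℝ) : ℕ → ℝ × ℝ
  | 0 => (1, 0)
  | N + 1 => ((∑' k, w N (k + 1)) * ((transferVec w N).1 + (transferVec w N).2),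
      w N 0 * (transferVec w N).1)

lemma confWeight_nonneg (hw : ∀ n k, 0 ≤ w n k) (N : ℕ) (ω : ℕ → ℕ) : 0 ≤ confWeight w N ω :=
  Finset.prod_nonneg fun n _ => hw n (ω n)

/-- Filling the entry at `N` of a sequence in `S` with a value in `K`, when the sequences in `S`
have the value `τ N` there. -/
def appendEquiv {K : Set ℕ} {S T : Set (ℕ → ℕ)} (hS : ∀ ω ∈ S, ω N = τ N)
    (hT : ∀ ω, ω ∈ T ↔ ω N ∈ K ∧ Function.update ω N (τ N) ∈ S) : K × S ≃ T where
  toFun x := ⟨Function.update x.2 N x.1, (hT _).2 ⟨by simp, by simp [← hS x.2 x.2.2]⟩⟩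
  invFun ω := (⟨ω.1 N, ((hT ω).1 ω.2).1⟩, ⟨Function.update ω N (τ N), ((hT ω).1 ω.2).2⟩)
  left_inv x := by ext <;> simp [← hS x.2 x.2.2]
  right_inv ω := by ext; simp

lemma hasSum_mul_of_nonneg {ι κ : Type*} {f : ι → ℝ} {g : κ → ℝ} {a b : ℝ} (hf : ∀ i, 0 ≤ f i)
    (hg : ∀ k, 0 ≤ g k) (ha : HasSum f a) (hb : HasSum g b) :
    HasSum (fun x : ι × κ => f x.1 * g x.2) (a * b) :=
  ha.mul hb (ha.summable.mul_of_nonneg hb.summable hf hg)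

lemma hasSum_confWeight_succ (hw : ∀ n k, 0 ≤ w n k) {K : Set ℕ} {S T : Set (ℕ → ℕ)}
    (hS : ∀ ω ∈ S, ω N = τ N)
    (hT : ∀ ω, ω ∈ T ↔ ω N ∈ K ∧ Function.update ω N (τ N) ∈ S) {a b : ℝ}
    (ha : HasSum (fun k : K => w N k) a)
    (hb : HasSum (fun ω : S => confWeight w N ω) b) :
    HasSum (fun ω : T => confWeight w (N + 1) ω) (a * b) := by
  have weight_append (x : K × S) :
      confWeight w (N + 1) (appendEquiv hS hT x) = w N x.1 * confWeight w N x.2 := by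
    obtain ⟨k, ω⟩ := x
    have prefix_eq : confWeight w N (Function.update ω N k) = confWeight w N ω :=
      Finset.prod_congr rfl fun n hn => by
        rw [Function.update_of_ne (Finset.mem_range.1 hn).ne]
    calc confWeight w (N + 1) (Function.update ω N k)
        = confWeight w N (Function.update ω N k) * w N (Function.update (ω : ℕ → ℕ) N k N) :=
          Finset.prod_range_succ _ N
      _ = w N k * confWeight w N ω := by rw [prefix_eq, Function.update_self, mul_comm]
  have product := hasSum_mul_of_nonneg (fun k : K => hw N k)
    (fun ω : S => confWeight_nonneg hw N ω) ha hb
  refine ((appendEquiv hS hT).hasSum_iff (f := fun ω : T => confWeight w (N + 1) ω)).1 ?_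
  simpa only [Function.comp_def, weight_append] using product

lemma posConf_zero (τ : ℕ → ℕ) : posConf τ 0 = {τ} := by
  ext ω
  simp [posConf, conf, funext_iff]

lemma conf_zero_sdiff_posConf (τ : ℕ → ℕ) : conf τ 0 \ posConf τ 0 = ∅ :=
  Set.sdiff_eq_empty.2 fun _ hω => ⟨hω, fun n hn => absurd hn n.succ_ne_zero⟩

lemma update_mem_conf {ω : ℕ → ℕ} :
    Function.update ω N (τ N) ∈ conf τ N ↔
      (∀ n ≥ N + 1, ω n = τ n) ∧ ∀ n, n + 1 < N → ¬(ω n = 0 ∧ ω (n + 1) = 0) := by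
  simp only [conf, Set.mem_ofPred_eq, Function.update_apply]
  grind

lemma mem_posConf_succ {ω : ℕ → ℕ} :
    ω ∈ posConf τ (N + 1) ↔ ω N ∈ Set.range Nat.succ ∧ Function.update ω N (τ N) ∈ conf τ N := by
  rw [update_mem_conf, Nat.range_succ]
  simp only [posConf, conf, Set.mem_ofPred_eq]
  grind

lemma mem_conf_succ_sdiff_posConf {ω : ℕ → ℕ} :
    ω ∈ conf τ (N + 1) \ posConf τ (N + 1) ↔
      ω N ∈ ({0} : Set ℕ) ∧ Function.update ω N (τ N) ∈ posConf τ N := by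
  simp only [posConf, conf, Set.mem_sdiff, Set.mem_ofPred_eq, Set.mem_singleton_iff,
    Function.update_apply]
  grind

lemma hasSum_conf (hw : ∀ n k, 0 ≤ w n k) (hw_sum : ∀ n, Summable (w n)) (N : ℕ) :
    HasSum (fun ω : posConf τ N => confWeight w N ω) (transferVec w N).1 ∧
    HasSum (fun ω : ↥(conf τ N \ posConf τ N) => confWeight w N ω)
      (transferVec w N).2 := by
  induction N with
  | zero =>
    refine ⟨?_, ?_⟩
    · rw [posConf_zero]
      exact hasSum_unique _
    · rw [conf_zero_sdiff_posConf]
      exact hasSum_empty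
  | succ N ih =>
    obtain ⟨hpos, hzero⟩ := ih
    have hconf : HasSum (fun ω : conf τ N => confWeight w N ω)
        ((transferVec w N).1 + (transferVec w N).2) := by
      have := HasSum.add_disjoint (f := confWeight w N) Set.disjoint_sdiff_right hpos hzero
      rwa [Set.union_sdiff_cancel (show posConf τ N ⊆ conf τ N from Set.sep_subset _ _)] at this
    have positive_entry : HasSum (fun k : Set.range Nat.succ => w N k) (∑' k, w N (k + 1)) :=
      (Nat.succ_injective.hasSum_range_iff).2 ((summable_nat_add_iff 1).2 (hw_sum N)).hasSum
    have zero_entry : HasSum (fun k : ({0} : Set ℕ) => w N k) (w N 0) := by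
      simpa using hasSum_unique (fun k : ({0} : Set ℕ) => w N k)
    exact ⟨hasSum_confWeight_succ hw (fun ω hω => hω.1 N le_rfl) (fun _ => mem_posConf_succ)
        positive_entry hconf,
      hasSum_confWeight_succ hw (fun ω hω => hω.1.1 N le_rfl)
        (fun _ => mem_conf_succ_sdiff_posConf) zero_entry hpos⟩

end Transfer

/-! ### The weights of the sequences in `He` -/

section EntryWeight

variable {q t : ℝ}

/-- The contribution of an entry `k` at index `n` to `q ^ Afun ω * t ^ Bfun ω`. Measuring the entry
against the tail value `n % 2` lets one formula serve both parities. -/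
noncomputable def entryWeight (q t : ℝ) (n k : ℕ) : ℝ :=
  q ^ (((n : ℤ) + 1) * ((k : ℤ) - (n % 2 : ℕ))) * t ^ (2 * (((min k 1 : ℕ) : ℤ) - (n % 2 : ℕ)))

lemma entryWeight_nonneg (hq : 0 ≤ q) (t : ℝ) (n k : ℕ) : 0 ≤ entryWeight q t n k :=
  mul_nonneg (zpow_nonneg hq _) ((even_two_mul _).zpow_nonneg t)

lemma entryWeight_even_zero (q t : ℝ) (m : ℕ) : entryWeight q t (2 * m) 0 = 1 := by
  simp [entryWeight]

lemma entryWeight_even_succ (q t : ℝ) (m k : ℕ) :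
    entryWeight q t (2 * m) (k + 1) = t ^ 2 * q ^ (2 * m + 1) * (q ^ (2 * m + 1)) ^ k := by
  have exponent : ((2 * m : ℕ) + 1 : ℤ) * ((k + 1 : ℕ) - (2 * m % 2 : ℕ)) =
      ((2 * m + 1) * (k + 1) : ℕ) := by
    simp
  rw [entryWeight, exponent, zpow_natCast, Nat.mul_mod_right]
  simp
  ring

lemma entryWeight_odd_zero (q t : ℝ) (m : ℕ) :
    entryWeight q t (2 * m + 1) 0 = (t ^ 2 * q ^ (2 * m + 2))⁻¹ := by
  have exponent : ((2 * m + 1 : ℕ) + 1 : ℤ) * ((0 : ℕ) - (1 : ℕ)) = -(2 * m + 2 : ℕ) := by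
    push_cast
    ring
  rw [entryWeight, Nat.mul_add_mod_self_left, Nat.one_mod, exponent, zpow_neg, zpow_natCast]
  simp only [Nat.zero_min, CharP.cast_eq_zero, Nat.cast_one, zero_sub, mul_neg, mul_one, zpow_neg,
    zpow_ofNat]
  rw [mul_inv, mul_comm]

lemma entryWeight_odd_succ (q t : ℝ) (m k : ℕ) :
    entryWeight q t (2 * m + 1) (k + 1) = (q ^ (2 * m + 2)) ^ k := by
  have exponent : ((2 * m + 1 : ℕ) + 1 : ℤ) * ((k + 1 : ℕ) - (1 : ℕ)) =
      ((2 * m + 2) * k : ℕ) := by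
    push_cast
    ring
  rw [entryWeight, Nat.mul_add_mod_self_left, Nat.one_mod, exponent, zpow_natCast, pow_mul]
  simp

lemma hasSum_entryWeight_even_succ (hq0 : 0 ≤ q) (hq1 : q < 1) (t : ℝ) (m : ℕ) :
    HasSum (fun k => entryWeight q t (2 * m) (k + 1))
      (t ^ 2 * q ^ (2 * m + 1) * (1 - q ^ (2 * m + 1))⁻¹) := by
  simp only [entryWeight_even_succ]
  exact (hasSum_geometric_of_lt_one (by positivity)
    (pow_lt_one₀ hq0 hq1 (2 * m).succ_ne_zero)).mul_left _

lemma hasSum_entryWeight_odd_succ (hq0 : 0 ≤ q) (hq1 : q < 1) (t : ℝ) (m : ℕ) :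
    HasSum (fun k => entryWeight q t (2 * m + 1) (k + 1)) (1 - q ^ (2 * m + 2))⁻¹ := by
  simp only [entryWeight_odd_succ]
  exact hasSum_geometric_of_lt_one (by positivity) (pow_lt_one₀ hq0 hq1 (2 * m + 1).succ_ne_zero)

lemma summable_entryWeight (hq0 : 0 ≤ q) (hq1 : q < 1) (t : ℝ) (n : ℕ) :
    Summable (entryWeight q t n) := by
  refine (summable_nat_add_iff 1).1 ?_
  obtain ⟨m, rfl | rfl⟩ := n.even_or_odd'
  · exact (hasSum_entryWeight_even_succ hq0 hq1 t m).summable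
  · exact (hasSum_entryWeight_odd_succ hq0 hq1 t m).summable

lemma isTransferSolution_transferVec (hq0 : 0 < q) (hq1 : q < 1) (ht : t ≠ 0) :
    IsTransferSolution q (t ^ 2) (fun m => (transferVec (entryWeight q t) (2 * m)).1)
      (fun m => t ^ 2 * q ^ (2 * m) * (transferVec (entryWeight q t) (2 * m)).2) := by
  have step_even (m : ℕ) := (hasSum_entryWeight_even_succ hq0.le hq1 t m).tsum_eq
  have step_odd (m : ℕ) := (hasSum_entryWeight_odd_succ hq0.le hq1 t m).tsum_eq
  have even_ne_zero (m : ℕ) := (one_sub_pow_pos hq0.le hq1 (2 * m).succ_ne_zero).ne'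
  have odd_ne_zero (m : ℕ) := (one_sub_pow_pos hq0.le hq1 (2 * m + 1).succ_ne_zero).ne'
  have := hq0.ne'
  refine ⟨rfl, by simp [transferVec], fun m => ?_, fun m => ?_⟩
  · have := even_ne_zero m
    simp only [Nat.mul_succ, transferVec, step_even, entryWeight_odd_zero]
    field_simp
    ring
  · have := even_ne_zero m
    have := odd_ne_zero m
    simp only [Nat.mul_succ, transferVec, step_even, step_odd, entryWeight_odd_zero,
      entryWeight_even_zero]
    field_simp

lemma prod_zpow_eq_zpow_sum {ι G : Type*} [CommGroupWithZero G] {a : G} (ha : a ≠ 0)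
    (s : Finset ι) (f : ι → ℤ) : ∏ i ∈ s, a ^ f i = a ^ ∑ i ∈ s, f i := by
  classical
  induction s using Finset.induction_on with
  | empty => simp
  | insert i s hi ih => rw [Finset.prod_insert hi, Finset.sum_insert hi, ih, zpow_add₀ ha]

lemma Afun_eq_sum {ω : ℕ → ℕ} {N : ℕ} (hω : ∀ n ≥ N, ω n = n % 2) :
    Afun ω = ∑ n ∈ Finset.range N, ((n : ℤ) + 1) * ((ω n : ℤ) - (n % 2 : ℕ)) := by
  have summand_eq (n : ℕ) : (if (n + 1) % 2 = 1 then ((n : ℤ) + 1) * (ω n : ℤ)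
      else ((n : ℤ) + 1) * ((ω n : ℤ) - 1)) = ((n : ℤ) + 1) * ((ω n : ℤ) - (n % 2 : ℕ)) := by
    obtain h | h := n.mod_two_eq_zero_or_one <;> simp [Nat.add_mod, h]
  simp only [Afun, summand_eq]
  refine finsum_eq_sum_of_support_subset _ fun n hn => ?_
  by_contra hnN
  simp_all

lemma Bfun_eq_sum {ω : ℕ → ℕ} {N : ℕ} (hω : ∀ n ≥ N, ω n = n % 2) :
    Bfun ω = ∑ n ∈ Finset.range N, 2 * (((min (ω n) 1 : ℕ) : ℤ) - (n % 2 : ℕ)) := by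
  have odd_sum : (∑ᶠ n : ℕ, if (n + 1) % 2 = 1 ∧ 1 ≤ ω n then (1 : ℤ) else 0) =
      ∑ n ∈ Finset.range N, if (n + 1) % 2 = 1 ∧ 1 ≤ ω n then (1 : ℤ) else 0 := by
    refine finsum_eq_sum_of_support_subset _ fun n hn => ?_
    grind [Function.mem_support]
  have even_sum : (∑ᶠ n : ℕ, if (n + 1) % 2 = 0 ∧ ω n = 0 then (1 : ℤ) else 0) =
      ∑ n ∈ Finset.range N, if (n + 1) % 2 = 0 ∧ ω n = 0 then (1 : ℤ) else 0 := by
    refine finsum_eq_sum_of_support_subset _ fun n hn => ?_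
    grind [Function.mem_support]
  rw [Bfun, odd_sum, even_sum, ← Finset.sum_sub_distrib, Finset.mul_sum]
  refine Finset.sum_congr rfl fun n _ => ?_
  grind

lemma zpow_Afun_mul_zpow_Bfun (hq : q ≠ 0) (ht : t ≠ 0) {ω : ℕ → ℕ} {N : ℕ}
    (hω : ∀ n ≥ N, ω n = n % 2) :
    q ^ Afun ω * t ^ Bfun ω = confWeight (entryWeight q t) N ω := by
  rw [Afun_eq_sum hω, Bfun_eq_sum hω, ← prod_zpow_eq_zpow_sum hq, ← prod_zpow_eq_zpow_sum ht,
    ← Finset.prod_mul_distrib]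
  rfl

lemma hasSum_posConf_zpow (hq0 : 0 < q) (hq1 : q < 1) (ht : t ≠ 0) (N : ℕ) :
    HasSum (fun ω : posConf (· % 2) N => q ^ Afun ω * t ^ Bfun ω)
      (transferVec (entryWeight q t) N).1 := by
  have weight_eq (ω : posConf (· % 2) N) :
      q ^ Afun ω * t ^ Bfun ω = confWeight (entryWeight q t) N ω :=
    zpow_Afun_mul_zpow_Bfun hq0.ne' ht ω.2.1.1
  simpa only [weight_eq] using
    (hasSum_conf (entryWeight_nonneg hq0.le t) (summable_entryWeight hq0.le hq1 t) N).1

end EntryWeight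

lemma mem_posConf_two_mul {ω : ℕ → ℕ} {m : ℕ} :
    ω ∈ posConf (· % 2) (2 * m) ↔
      (∀ n, ¬(ω n = 0 ∧ ω (n + 1) = 0)) ∧ ∀ n ≥ 2 * m, ω n = n % 2 := by
  simp only [posConf, conf, Set.mem_ofPred_eq]
  constructor
  · rintro ⟨⟨tail, no_zeros⟩, last_pos⟩
    refine ⟨fun n => ?_, tail⟩
    grind
  · grind

lemma monotone_posConf_two_mul : Monotone fun m => posConf (· % 2) (2 * m) := by
  intro m m' hm ω hω
  rw [mem_posConf_two_mul] at hω ⊢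
  exact ⟨hω.1, fun n hn => hω.2 n (by lia)⟩

lemma iUnion_posConf_two_mul : ⋃ m, posConf (· % 2) (2 * m) = He := by
  ext ω
  have tail_eq (n : ℕ) : (if (n + 1) % 2 = 0 then 1 else 0) = n % 2 := by lia
  simp only [Set.mem_iUnion, mem_posConf_two_mul, He, Set.mem_ofPred_eq, tail_eq, exists_and_left]
  refine and_congr_right fun _ => ⟨fun ⟨m, hm⟩ => ⟨2 * m, hm⟩, fun ⟨N, hN⟩ => ⟨N, ?_⟩⟩
  exact fun n hn => hN n (by lia)

theorem statement9_general (q t : ℝ) (hq0 : 0 < q) (hq1 : q < 1) (ht : t ≠ 0) :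
    Multipliable (fun i : ℕ =>
      (1 + (t ^ 2 - 2) * q ^ (2 * i + 1) + q ^ (4 * i + 2)) * (1 + q ^ (i + 1)) /
        (1 - q ^ (i + 1))) ∧
    HasSum (fun ω : He => q ^ Afun ω.1 * t ^ Bfun ω.1)
      (∏' i : ℕ, (1 + (t ^ 2 - 2) * q ^ (2 * i + 1) + q ^ (4 * i + 2)) * (1 + q ^ (i + 1)) /
        (1 - q ^ (i + 1))) := by
  have hq : ‖q‖ < 1 := by rwa [Real.norm_of_nonneg hq0.le]
  have weight_nonneg (ω : ℕ → ℕ) : 0 ≤ q ^ Afun ω * t ^ Bfun ω :=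
    mul_nonneg (zpow_nonneg hq0.le _) ((even_two_mul _).zpow_nonneg t)
  have numerator : Multipliable fun i : ℕ =>
      1 + (t ^ 2 - 2) * q ^ (2 * i + 1) + q ^ (4 * i + 2) :=
    (multipliable_one_add_mul_pow_add_mul_pow ((t ^ 2 - 2) * q) (q ^ 2)
      (norm_sq_lt_one hq)).congr fun i => by ring
  have product := numerator.hasProd.mul (hasProd_one_add_pow_div_one_sub_pow hq)
  simp only [← mul_div_assoc] at product
  refine ⟨product.multipliable, ?_⟩
  rw [product.tprod_eq, ← iUnion_posConf_two_mul]
  have limit := (isTransferSolution_transferVec hq0 hq1 ht).tendsto hq0.le hq1 (sq_nonneg t)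
  exact hasSum_iUnion_of_monotone (f := fun ω => q ^ Afun ω * t ^ Bfun ω) weight_nonneg
    monotone_posConf_two_mul (fun m => hasSum_posConf_zpow hq0 hq1 ht (2 * m)) limit

theorem statement9 (q : ℝ) (hq0 : 0 < q) (hq1 : q < 1) :
    Multipliable (fun i : ℕ => (1 + q ^ (2 * i + 1)) ^ 2 * (1 + q ^ (i + 1)) / (1 - q ^ (i + 1))) ∧
    Seven q 2 = ∏' i : ℕ, (1 + q ^ (2 * i + 1)) ^ 2 * (1 + q ^ (i + 1)) / (1 - q ^ (i + 1)) := by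
  have factor_eq (i : ℕ) : 1 + ((2 : ℝ) ^ 2 - 2) * q ^ (2 * i + 1) + q ^ (4 * i + 2) =
      (1 + q ^ (2 * i + 1)) ^ 2 := by ring
  simpa only [factor_eq, Seven] using
    (statement9_general q 2 hq0 hq1 two_ne_zero).imp_right HasSum.tsum_eq
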